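/- Let k ≥ 1 be a fixed integer. Suppose p_s = o(1), K_n ≥ 2 for all sufficiently large n, p_e = (ln n + (k−1)·ln ln n + α_n)/n with lim_{n→∞} α_n = −∞, and there exists ε > 0 with n·p_e > ε for all sufficiently large n. Then for any fixed positive integer ℓ and any two distinct nodes v_x, v_y of 𝔾_on(n,K_n,P_n,p_n): P[D_{x,ℓ} ∩ D_{y,ℓ} ∩ E_{xy}] = o(P[D_{x,ℓ} ∩ D_{y,ℓ} ∩ (E_{xy})^c]). -/

import Mathlib

open MeasureTheory Filter Asymptotics
open scoped ENNReal

noncomputable section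

/-- Key rings: `K`-element subsets of a key pool of size `P`. -/
abbrev KeyRing (P K : ℕ) : Type := {s : Finset (Fin P) // s.card = K}

instance (P K : ℕ) : MeasurableSpace (KeyRing P K) := ⊤

/-- The uniform probability measure on key rings. -/
def uniformKeyMeasure (P K : ℕ) : Measure (KeyRing P K) :=
  (Fintype.card (KeyRing P K) : ℝ≥0∞)⁻¹ • (Measure.count : Measure (KeyRing P K))

/-- The Bernoulli measure with parameter `p` on `Bool`. -/
def bern (p : ℝ) : Measure Bool :=
  ENNReal.ofReal p • Measure.dirac true + ENNReal.ofReal (1 - p) • Measure.dirac false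

/-- Sample space underlying `𝔾_on(n, K, P, p)`: independent key rings for the `n`
nodes together with independent on/off channel states for each pair of nodes. -/
abbrev GonSpace (n K P : ℕ) : Type :=
  (Fin n → KeyRing P K) × (Sym2 (Fin n) → Bool)

/-- The probability measure of the model `𝔾_on(n, K, P, p)`: the key rings of the
`n` nodes are independent and uniform, and the channels are independent
Bernoulli(`p`) variables, independent of the key rings. -/
def gonMeasure (n K P : ℕ) (p : ℝ) : Measure (GonSpace n K P) :=
  (Measure.pi fun _ : Fin n => uniformKeyMeasure P K).prod
    (Measure.pi fun _ : Sym2 (Fin n) => bern p)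

/-- The random graph `𝔾_on`: an edge is present iff the key rings intersect and the
channel between the two nodes is on. -/
def gonGraph {n K P : ℕ} (ω : GonSpace n K P) : SimpleGraph (Fin n) where
  Adj i j := i ≠ j ∧ ((ω.1 i).1 ∩ (ω.1 j).1).Nonempty ∧ ω.2 s(i, j) = true
  symm := by
    refine ⟨?_⟩
    rintro i j ⟨h1, h2, h3⟩
    exact ⟨h1.symm, by rwa [Finset.inter_comm], by rwa [Sym2.eq_swap]⟩
  loopless := ⟨fun i h => h.1 rfl⟩

/-- The random key graph `G(n, K, P)`: an edge is present iff the key rings intersect. -/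
def rkgGraph {n K P : ℕ} (ω : Fin n → KeyRing P K) : SimpleGraph (Fin n) where
  Adj i j := i ≠ j ∧ ((ω i).1 ∩ (ω j).1).Nonempty
  symm := by
    refine ⟨?_⟩
    rintro i j ⟨h1, h2⟩
    exact ⟨h1.symm, by rwa [Finset.inter_comm]⟩
  loopless := ⟨fun i h => h.1 rfl⟩

/-- The probability measure of the random key graph model. -/
def rkgMeasure (n K P : ℕ) : Measure (Fin n → KeyRing P K) :=
  Measure.pi fun _ : Fin n => uniformKeyMeasure P K

/-- Degree of a vertex. -/
def gDeg {V : Type*} (G : SimpleGraph V) (v : V) : ℕ := Nat.card {w // G.Adj v w}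

/-- Minimum vertex degree. -/
def minDeg {V : Type*} (G : SimpleGraph V) : ℕ := sInf (Set.range (gDeg G))

/-- A graph is `k`-connected if it remains connected after the removal of any
`k - 1` of its vertices. -/
def KConnected {V : Type*} (G : SimpleGraph V) (k : ℕ) : Prop :=
  ∀ S : Finset V, S.card ≤ k - 1 → (G.induce ((S : Set V)ᶜ)).Connected

/-- Vertex connectivity: the least number of vertices whose deletion disconnects
the graph. -/
def vertexConn {V : Type*} (G : SimpleGraph V) : ℕ :=
  sInf {m | ∃ S : Finset V, S.card = m ∧ ¬ (G.induce ((S : Set V)ᶜ)).Connected}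

/-- `p_s`: the probability that two key rings share at least one key. -/
def psf (K P : ℕ) : ℝ :=
  if 2 * K ≤ P then 1 - (Nat.choose (P - K) K : ℝ) / (Nat.choose P K : ℝ) else 1

/-- `p_e = p · p_s`: the probability of an edge in `𝔾_on`. -/
def pef (K P : ℕ) (p : ℝ) : ℝ := p * psf K P

/-- The event `D_{x,ℓ}` that the node with index `x` has degree exactly `ℓ`. -/
def degEvent (n K P : ℕ) (x ℓ : ℕ) : Set (GonSpace n K P) :=
  {ω | ∃ hx : x < n, gDeg (gonGraph ω) ⟨x, hx⟩ = ℓ}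

/-- The event `E_{xy}` that the edge between the nodes with indices `x`, `y` is present. -/
def edgeEvent (n K P : ℕ) (x y : ℕ) : Set (GonSpace n K P) :=
  {ω | ∃ (hx : x < n) (hy : y < n), (gonGraph ω).Adj ⟨x, hx⟩ ⟨y, hy⟩}

/-- The event that the key rings of nodes `x` and `y` share exactly `u` keys. -/
def interCardEvent (n K P : ℕ) (x y u : ℕ) : Set (GonSpace n K P) :=
  {ω | ∃ (hx : x < n) (hy : y < n), ((ω.1 ⟨x, hx⟩).1 ∩ (ω.1 ⟨y, hy⟩).1).card = u}

/-- The event `K_{xy}` that the key rings of nodes `x` and `y` share at least one key. -/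
def keyShareEvent (n K P : ℕ) (x y : ℕ) : Set (GonSpace n K P) :=
  {ω | ∃ (hx : x < n) (hy : y < n), ((ω.1 ⟨x, hx⟩).1 ∩ (ω.1 ⟨y, hy⟩).1).Nonempty}

/-- `r_n = min(⌊P/K⌋, ⌊n/2⌋)`. -/
def rn (n K P : ℕ) : ℕ := min (P / K) (n / 2)

/-- The threshold array `J`. -/
def Jarr (n K P : ℕ) (ε lam mu : ℝ) (i : ℕ) : ℕ :=
  if i ≤ rn n K P then max ⌊(1 + ε) * (K : ℝ)⌋₊ ⌊lam * (K : ℝ) * (i : ℝ)⌋₊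
  else ⌊mu * (P : ℝ)⌋₊

/-- The event `𝓔(J)`: some set `T` of at least two nodes has a union of key rings of
size at most `J_{|T|}`. -/
def EJ (n K P : ℕ) (ε lam mu : ℝ) : Set (GonSpace n K P) :=
  {ω | ∃ T : Finset (Fin n), 2 ≤ T.card ∧
    (T.biUnion fun i => (ω.1 i).1).card ≤ Jarr n K P ε lam mu T.card}

theorem choose_mul_pow_le_choose_mul_pow {a b : ℕ} (h : a ≤ b) (k : ℕ) :
    a.choose k * b ^ k ≤ b.choose k * a ^ k := by
  have key : a.descFactorial k * b ^ k ≤ b.descFactorial k * a ^ k := by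
    induction k with
    | zero => simp
    | succ k ih =>
      rw [Nat.descFactorial_succ, Nat.descFactorial_succ, pow_succ, pow_succ]
      have h1 : (a - k) * b ≤ (b - k) * a := by
        rw [Nat.sub_mul, Nat.sub_mul, mul_comm b a]
        exact Nat.sub_le_sub_left (Nat.mul_le_mul_left k h) _
      calc (a - k) * a.descFactorial k * (b ^ k * b)
          = ((a - k) * b) * (a.descFactorial k * b ^ k) := by ring
        _ ≤ ((b - k) * a) * (b.descFactorial k * a ^ k) := Nat.mul_le_mul h1 ih
        _ = _ := by ring
  rw [Nat.descFactorial_eq_factorial_mul_choose, Nat.descFactorial_eq_factorial_mul_choose,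
    mul_assoc, mul_assoc] at key
  exact Nat.le_of_mul_le_mul_left key (Nat.factorial_pos k)

/-- The average of a function over all key rings. -/
def keyAvg {P K : ℕ} (f : KeyRing P K → ℝ) : ℝ :=
  (Fintype.card (KeyRing P K) : ℝ)⁻¹ * ∑ T, f T

theorem card_keyRing (P K : ℕ) : Fintype.card (KeyRing P K) = P.choose K := by
  simp [Fintype.card_finset_len]

theorem sum_keyRing {P K : ℕ} (f : Finset (Fin P) → ℝ) :
    ∑ T : KeyRing P K, f T.1 = ∑ s ∈ Finset.powersetCard K Finset.univ, f s := by
  rw [← Finset.sum_subtype (p := fun s : Finset (Fin P) => s.card = K)]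
  intro s
  simp [Finset.mem_powersetCard]

theorem keyAvg_mono {P K : ℕ} {f g : KeyRing P K → ℝ} (h : ∀ T, f T ≤ g T) :
    keyAvg f ≤ keyAvg g :=
  mul_le_mul_of_nonneg_left (Finset.sum_le_sum fun T _ => h T) (by positivity)

theorem keyAvg_nonneg {P K : ℕ} {f : KeyRing P K → ℝ} (h : ∀ T, 0 ≤ f T) : 0 ≤ keyAvg f :=
  mul_nonneg (by positivity) (Finset.sum_nonneg fun T _ => h T)

theorem keyAvg_add {P K : ℕ} (f g : KeyRing P K → ℝ) :
    keyAvg (fun T => f T + g T) = keyAvg f + keyAvg g := by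
  simp [keyAvg, Finset.sum_add_distrib, mul_add]

theorem keyAvg_sub {P K : ℕ} (f g : KeyRing P K → ℝ) :
    keyAvg (fun T => f T - g T) = keyAvg f - keyAvg g := by
  simp [keyAvg, Finset.sum_sub_distrib, mul_sub]

theorem keyAvg_const_mul {P K : ℕ} (c : ℝ) (f : KeyRing P K → ℝ) :
    keyAvg (fun T => c * f T) = c * keyAvg f := by
  simp only [keyAvg, ← Finset.mul_sum]; ring

theorem keyAvg_mul_const {P K : ℕ} (c : ℝ) (f : KeyRing P K → ℝ) :
    keyAvg (fun T => f T * c) = keyAvg f * c := by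
  simp only [keyAvg, ← Finset.sum_mul]; ring

theorem keyAvg_sum {P K : ℕ} {ι : Type*} (s : Finset ι) (f : ι → KeyRing P K → ℝ) :
    keyAvg (fun T => ∑ i ∈ s, f i T) = ∑ i ∈ s, keyAvg (f i) := by
  simp only [keyAvg, ← Finset.mul_sum]; rw [Finset.sum_comm]

theorem keyAvg_const {P K : ℕ} (hKP : K ≤ P) (c : ℝ) :
    keyAvg (fun _ : KeyRing P K => c) = c := by
  have : (Fintype.card (KeyRing P K) : ℝ) ≠ 0 := by
    rw [card_keyRing]; exact_mod_cast (Nat.choose_pos hKP).ne'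
  rw [keyAvg, Finset.sum_const, Finset.card_univ, nsmul_eq_mul, inv_mul_cancel_left₀ this]

theorem keyAvg_superset_le {P K : ℕ} (hKP : K ≤ P) (A : Finset (Fin P)) :
    keyAvg (fun T : KeyRing P K => if A ⊆ T.1 then (1 : ℝ) else 0) ≤
      ((K : ℝ) / P) ^ A.card := by
  have hN : (0 : ℝ) < P.choose K := by exact_mod_cast Nat.choose_pos hKP
  rw [keyAvg, sum_keyRing (fun s => if A ⊆ s then (1 : ℝ) else 0), card_keyRing,
    Finset.sum_boole]
  by_cases hA : A.card ≤ K
  · have hAP : A.card ≤ P := hA.trans hKP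
    have hcA : (0 : ℝ) < P.choose A.card := by exact_mod_cast Nat.choose_pos hAP
    have hcard : ((Finset.powersetCard K (Finset.univ : Finset (Fin P))).filter
        (fun s => A ⊆ s)).card = (P - A.card).choose (K - A.card) := by
      rw [Finset.card_filter_powersetCard_subset A Finset.univ K (Finset.subset_univ _) hA]
      simp
    rw [hcard]
    have h1 : ((P.choose K * K.choose A.card : ℕ) : ℝ) =
        (P.choose A.card * (P - A.card).choose (K - A.card) : ℕ) := by
      rw [Nat.choose_mul hA]
    have h2 : ((K.choose A.card * P ^ A.card : ℕ) : ℝ) ≤ (P.choose A.card * K ^ A.card : ℕ) := by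
      exact_mod_cast choose_mul_pow_le_choose_mul_pow hKP A.card
    push_cast at h1 h2
    rcases Nat.eq_zero_or_pos P with hP | hP
    · subst hP
      obtain rfl : K = 0 := by omega
      obtain h0 : A.card = 0 := by omega
      simp [h0]
    · have hP' : (0 : ℝ) < (P : ℝ) ^ A.card := by positivity
      rw [div_pow, inv_mul_eq_div, div_le_div_iff₀ hN hP']
      have h3 : (P.choose A.card : ℝ) * (((P - A.card).choose (K - A.card) : ℝ) * P ^ A.card) ≤
          P.choose A.card * (K ^ A.card * P.choose K) := by
        calc _ = (P.choose K : ℝ) * (K.choose A.card * P ^ A.card) := by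
              rw [← mul_assoc, ← h1]; ring
          _ ≤ (P.choose K : ℝ) * (P.choose A.card * K ^ A.card) := by gcongr
          _ = _ := by ring
      exact le_of_mul_le_mul_left h3 hcA
  · have : (Finset.powersetCard K (Finset.univ : Finset (Fin P))).filter
        (fun s => A ⊆ s) = ∅ := by
      apply Finset.filter_false_of_mem
      intro s hs hAs
      rw [Finset.mem_powersetCard] at hs
      exact hA (hs.2 ▸ Finset.card_le_card hAs)
    rw [this]
    simp
    positivity

/-- The indicator that two key rings share a key. -/
def meetInd {P K : ℕ} (X T : KeyRing P K) : ℝ := if (X.1 ∩ T.1).Nonempty then 1 else 0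

theorem keyAvg_meetInd {P K : ℕ} (hKP : K ≤ P) (X : KeyRing P K) :
    keyAvg (meetInd X) = psf K P := by
  have hN : (0 : ℝ) < P.choose K := by exact_mod_cast Nat.choose_pos hKP
  have h1 : keyAvg (fun T => 1 - meetInd X T) = (P - K).choose K / P.choose K := by
    have : ∀ T : KeyRing P K, 1 - meetInd X T = if T.1 ⊆ X.1ᶜ then (1 : ℝ) else 0 := by
      intro T
      have : (X.1 ∩ T.1).Nonempty ↔ ¬ T.1 ⊆ X.1ᶜ := by
        rw [Finset.subset_compl_iff_disjoint_left, Finset.not_disjoint_iff_nonempty_inter]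
      by_cases h : T.1 ⊆ X.1ᶜ <;> simp [meetInd, this, h]
    simp only [this]
    rw [keyAvg, sum_keyRing (fun s => if s ⊆ X.1ᶜ then (1 : ℝ) else 0), card_keyRing,
      Finset.sum_boole, inv_mul_eq_div]
    congr 2
    have : (Finset.powersetCard K (Finset.univ : Finset (Fin P))).filter (fun s => s ⊆ X.1ᶜ) =
        Finset.powersetCard K X.1ᶜ := by
      ext s; simp [Finset.mem_powersetCard, and_comm]
    rw [this, Finset.card_powersetCard, Finset.card_compl, X.2, Fintype.card_fin]
  rw [keyAvg_sub, keyAvg_const hKP] at h1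
  unfold psf
  split_ifs with h
  · linarith
  · rw [Nat.choose_eq_zero_of_lt (by omega)] at h1
    simp at h1
    linarith

theorem psf_nonneg {P K : ℕ} (hKP : K ≤ P) : 0 ≤ psf K P := by
  obtain ⟨s, -, hs⟩ := Finset.exists_subset_card_eq (s := (Finset.univ : Finset (Fin P)))
    (n := K) (by simpa using hKP)
  rw [← keyAvg_meetInd hKP ⟨s, hs⟩]
  exact keyAvg_nonneg fun T => by unfold meetInd; split_ifs <;> norm_num

/-- `K² / P` is at most `p_s / (1 - p_s)`. -/
theorem sq_div_le_psf_div {P K : ℕ} (hP : 0 < P) (h : psf K P < 1) :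
    (K : ℝ) ^ 2 / P ≤ psf K P / (1 - psf K P) := by
  have h2 : 2 * K ≤ P := by
    by_contra h2
    simp [psf, h2] at h
  have hN : (0 : ℝ) < P.choose K := by exact_mod_cast Nat.choose_pos (by omega)
  have hP' : (0 : ℝ) < P := by exact_mod_cast hP
  have h3 : 1 - psf K P = (P - K).choose K / P.choose K := by simp [psf, h2]
  have h4 : 1 - psf K P ≤ (1 - (K : ℝ) / P) ^ K := by
    have := choose_mul_pow_le_choose_mul_pow (Nat.sub_le P K) K
    have h5 : (((P - K).choose K * P ^ K : ℕ) : ℝ) ≤ (P.choose K * (P - K) ^ K : ℕ) := by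
      exact_mod_cast this
    push_cast [Nat.cast_sub (show K ≤ P by omega)] at h5
    rw [h3, one_sub_div hP'.ne', div_pow, div_le_div_iff₀ hN (by positivity)]
    linarith
  have h5 : 1 - psf K P ≤ Real.exp (-((K : ℝ) ^ 2 / P)) := by
    refine h4.trans ?_
    have h6 : 1 - (K : ℝ) / P ≤ Real.exp (-((K : ℝ) / P)) := by
      have := Real.add_one_le_exp (-((K : ℝ) / P)); linarith
    have h7 : 0 ≤ 1 - (K : ℝ) / P := by
      rw [sub_nonneg, div_le_one hP']; exact_mod_cast (by omega : K ≤ P)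
    calc _ ≤ Real.exp (-((K : ℝ) / P)) ^ K := pow_le_pow_left₀ h7 h6 K
      _ = _ := by rw [← Real.exp_nat_mul]; congr 1; ring
  have h6 := Real.add_one_le_exp ((K : ℝ) ^ 2 / P)
  have h7 : 0 < 1 - psf K P := by linarith
  rw [Real.exp_neg, le_inv_comm₀ h7 (Real.exp_pos _)] at h5
  have : psf K P / (1 - psf K P) = (1 - psf K P)⁻¹ - 1 := by field_simp; ring
  linarith

/-- The probability that a random key ring meets both `X` and `Y`. -/
def bothMeet {P K : ℕ} (X Y : KeyRing P K) : ℝ := keyAvg fun T => meetInd X T * meetInd Y T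

theorem bothMeet_nonneg {P K : ℕ} (X Y : KeyRing P K) : 0 ≤ bothMeet X Y :=
  keyAvg_nonneg fun T => by unfold meetInd; split_ifs <;> norm_num

theorem bothMeet_le {P K : ℕ} (hKP : K ≤ P) (X Y : KeyRing P K) :
    bothMeet X Y ≤ ((K : ℝ) ^ 2 / P) ^ 2 + (X.1 ∩ Y.1).card * ((K : ℝ) / P) := by
  have h1 : bothMeet X Y ≤ keyAvg (fun T : KeyRing P K =>
      ∑ i ∈ X.1, ∑ j ∈ Y.1, if ({i, j} : Finset (Fin P)) ⊆ T.1 then (1 : ℝ) else 0) := by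
    apply keyAvg_mono
    intro T
    unfold meetInd
    have hnn : ∀ i j : Fin P, (0 : ℝ) ≤ if ({i, j} : Finset (Fin P)) ⊆ T.1 then 1 else 0 := by
      intro i j; split_ifs <;> norm_num
    have hnn' : 0 ≤ ∑ i ∈ X.1, ∑ j ∈ Y.1,
        if ({i, j} : Finset (Fin P)) ⊆ T.1 then (1 : ℝ) else 0 :=
      Finset.sum_nonneg fun i _ => Finset.sum_nonneg fun j _ => hnn i j
    by_cases hX : (X.1 ∩ T.1).Nonempty
    · by_cases hY : (Y.1 ∩ T.1).Nonempty
      · obtain ⟨i, hi⟩ := hX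
        obtain ⟨j, hj⟩ := hY
        have hX : (X.1 ∩ T.1).Nonempty := ⟨i, hi⟩
        have hY : (Y.1 ∩ T.1).Nonempty := ⟨j, hj⟩
        rw [Finset.mem_inter] at hi hj
        rw [if_pos hX, if_pos hY]
        refine le_trans ?_ (Finset.single_le_sum
          (fun i _ => Finset.sum_nonneg fun j _ => hnn i j) hi.1)
        refine le_trans ?_ (Finset.single_le_sum (fun j _ => hnn i j) hj.1)
        rw [if_pos]
        · norm_num
        · intro a ha
          simp only [Finset.mem_insert, Finset.mem_singleton] at ha
          rcases ha with rfl | rfl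
          exacts [hi.2, hj.2]
      · simpa [hY] using hnn'
    · simpa [hX] using hnn'
  refine h1.trans ?_
  simp only [keyAvg_sum]
  have h2 : ∀ i j : Fin P, keyAvg (fun T : KeyRing P K =>
      if ({i, j} : Finset (Fin P)) ⊆ T.1 then (1 : ℝ) else 0) ≤
      ((K : ℝ) / P) ^ 2 + if i = j then (K : ℝ) / P else 0 := by
    intro i j
    refine (keyAvg_superset_le hKP _).trans ?_
    by_cases hij : i = j
    · subst hij
      simp
      positivity
    · rw [Finset.card_pair hij]; simp [hij]
  calc _ ≤ ∑ i ∈ X.1, ∑ j ∈ Y.1, (((K : ℝ) / P) ^ 2 + if i = j then (K : ℝ) / P else 0) :=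
        Finset.sum_le_sum fun i _ => Finset.sum_le_sum fun j _ => h2 i j
    _ = _ := by
      simp only [Finset.sum_add_distrib, Finset.sum_const, X.2, Y.2, Finset.sum_ite_eq,
        nsmul_eq_mul]
      rw [← Finset.sum_filter, Finset.sum_const, Finset.filter_mem_eq_inter, nsmul_eq_mul]
      ring

/-- Exponential moment of the number of keys shared with a fixed key ring. -/
theorem keyAvg_pow_card_inter_le {P K : ℕ} (hKP : K ≤ P) (X : KeyRing P K) {b : ℝ}
    (hb : 0 ≤ b) :
    keyAvg (fun Y : KeyRing P K => (1 + b) ^ (X.1 ∩ Y.1).card) ≤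
      Real.exp (b * ((K : ℝ) ^ 2 / P)) := by
  have h1 : ∀ Y : KeyRing P K, (1 + b) ^ (X.1 ∩ Y.1).card =
      ∑ A ∈ X.1.powerset, b ^ A.card * if A ⊆ Y.1 then (1 : ℝ) else 0 := by
    intro Y
    rw [← Finset.prod_const, Finset.prod_one_add, ← Finset.filter_mem_eq_inter]
    simp only [Finset.prod_const, mul_ite, mul_one, mul_zero]
    rw [← Finset.sum_filter]
    congr 1
    ext A
    simp only [Finset.mem_powerset, Finset.mem_filter, Finset.filter_mem_eq_inter,
      Finset.subset_inter_iff]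
  simp only [h1, keyAvg_sum, keyAvg_const_mul]
  calc _ ≤ ∑ A ∈ X.1.powerset, b ^ A.card * ((K : ℝ) / P) ^ A.card :=
        Finset.sum_le_sum fun A _ =>
          mul_le_mul_of_nonneg_left (keyAvg_superset_le hKP A) (by positivity)
    _ = (1 + b * ((K : ℝ) / P)) ^ K := by
      have := Finset.prod_one_add (f := fun _ : Fin P => b * ((K : ℝ) / P)) X.1
      simp only [Finset.prod_const, X.2] at this
      rw [this]
      simp only [mul_pow]
    _ ≤ Real.exp (b * ((K : ℝ) / P)) ^ K := by
      apply pow_le_pow_left₀ (by positivity)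
      have := Real.add_one_le_exp (b * ((K : ℝ) / P)); linarith
    _ = _ := by rw [← Real.exp_nat_mul]; congr 1; ring

theorem keyAvg_meetInd_mul_pow_card_inter_le {P K : ℕ} (hKP : K ≤ P) (X : KeyRing P K) {b : ℝ}
    (hb : 0 ≤ b) :
    keyAvg (fun Y : KeyRing P K => meetInd X Y * (1 + b) ^ (X.1 ∩ Y.1).card) ≤
      Real.exp (b * ((K : ℝ) ^ 2 / P)) - 1 + psf K P := by
  have h1 : ∀ Y : KeyRing P K, meetInd X Y * (1 + b) ^ (X.1 ∩ Y.1).card =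
      (1 + b) ^ (X.1 ∩ Y.1).card - (1 - meetInd X Y) := by
    intro Y
    unfold meetInd
    split_ifs with h
    · simp
    · rw [Finset.not_nonempty_iff_eq_empty] at h
      simp [h]
  simp only [h1]
  rw [keyAvg_sub, keyAvg_sub, keyAvg_const hKP, keyAvg_meetInd hKP]
  have := keyAvg_pow_card_inter_le hKP X hb
  linarith

theorem isProbabilityMeasure_uniformKeyMeasure {P K : ℕ} (hKP : K ≤ P) :
    IsProbabilityMeasure (uniformKeyMeasure P K) := by
  refine ⟨?_⟩
  have h : (Fintype.card (KeyRing P K) : ℝ≥0∞) ≠ 0 := by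
    rw [card_keyRing]; exact_mod_cast (Nat.choose_pos hKP).ne'
  rw [uniformKeyMeasure, Measure.smul_apply, Measure.count_univ, smul_eq_mul,
    ENat.card_eq_coe_fintype_card]
  simpa using ENNReal.inv_mul_cancel h (by simp)

theorem isProbabilityMeasure_bern {p : ℝ} (hp0 : 0 ≤ p) (hp1 : p ≤ 1) :
    IsProbabilityMeasure (bern p) := by
  refine ⟨?_⟩
  simp only [bern, Measure.add_apply, Measure.smul_apply, measure_univ, smul_eq_mul, mul_one]
  rw [← ENNReal.ofReal_add hp0 (by linarith)]
  simp

theorem integral_uniformKeyMeasure {P K : ℕ} (f : KeyRing P K → ℝ) :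
    ∫ T, f T ∂(uniformKeyMeasure P K) = keyAvg f := by
  rw [uniformKeyMeasure, integral_smul_measure, integral_count, keyAvg]
  simp

/-- The expectation of a function of a Bernoulli variable. -/
def bernAvg (p : ℝ) (f : Bool → ℝ) : ℝ := p * f true + (1 - p) * f false

theorem integral_bern {p : ℝ} (hp0 : 0 ≤ p) (hp1 : p ≤ 1) (f : Bool → ℝ) :
    ∫ b, f b ∂(bern p) = bernAvg p f := by
  rw [bern, integral_add_measure, integral_smul_measure, integral_smul_measure,
    integral_dirac, integral_dirac, ENNReal.toReal_ofReal hp0,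
    ENNReal.toReal_ofReal (by linarith), bernAvg, smul_eq_mul, smul_eq_mul]
  · exact (Integrable.of_finite).smul_measure ENNReal.ofReal_ne_top
  · exact (Integrable.of_finite).smul_measure ENNReal.ofReal_ne_top

theorem integral_pi_prod_comp_of_injOn {ι E β : Type*} [Fintype E] [MeasurableSpace β]
    (μ : Measure β) [IsProbabilityMeasure μ] (I : Finset ι) (e : ι → E)
    (he : Set.InjOn e I) (f : ι → β → ℝ) :
    ∫ C : E → β, ∏ i ∈ I, f i (C (e i)) ∂(Measure.pi fun _ : E => μ) =
      ∏ i ∈ I, ∫ b, f i b ∂μ := by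
  classical
  have h1 : ∀ C : E → β, ∏ i ∈ I, f i (C (e i)) =
      ∏ a : E, ∏ i ∈ I.filter (fun i => e i = a), f i (C a) := by
    intro C
    rw [← Finset.prod_fiberwise I e]
    refine Finset.prod_congr rfl fun a _ => Finset.prod_congr rfl fun i hi => ?_
    rw [(Finset.mem_filter.mp hi).2]
  simp only [h1]
  rw [integral_fintype_prod_eq_prod (μ := fun _ : E => μ)
    (f := fun a b => ∏ i ∈ I.filter (fun i => e i = a), f i b),
    ← Finset.prod_fiberwise I e]
  refine Finset.prod_congr rfl fun a _ => ?_
  have hcard : (I.filter (fun i => e i = a)).card ≤ 1 := by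
    rw [Finset.card_le_one]
    intro i hi j hj
    rw [Finset.mem_filter] at hi hj
    exact he hi.1 hj.1 (hi.2.trans hj.2.symm)
  rcases Nat.le_one_iff_eq_zero_or_eq_one.mp hcard with h | h
  · rw [Finset.card_eq_zero] at h
    simp [h]
  · obtain ⟨i, hi⟩ := Finset.card_eq_one.mp h
    simp [hi]

theorem integral_key_pi {n P K : ℕ} (hKP : K ≤ P) {x y : Fin n} (hxy : x ≠ y)
    (Φ : KeyRing P K → KeyRing P K → ℝ)
    (H : Fin n → KeyRing P K → KeyRing P K → KeyRing P K → ℝ) :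
    ∫ S : Fin n → KeyRing P K, Φ (S x) (S y) *
        ∏ z ∈ ({x, y} : Finset (Fin n))ᶜ, H z (S x) (S y) (S z)
        ∂(Measure.pi fun _ : Fin n => uniformKeyMeasure P K) =
      keyAvg fun X => keyAvg fun Y => Φ X Y *
        ∏ z ∈ ({x, y} : Finset (Fin n))ᶜ, keyAvg (H z X Y) := by
  classical
  have := isProbabilityMeasure_uniformKeyMeasure hKP
  let φ : KeyRing P K → KeyRing P K → Fin n → KeyRing P K → ℝ := fun X Y i T =>
    if i = x then (if T = X then 1 else 0) else
      if i = y then (if T = Y then 1 else 0) else H i X Y T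
  have hsplit : ∀ (X Y : KeyRing P K) (g : (KeyRing P K → ℝ) → Fin n → ℝ),
      ∏ i, g (φ X Y i) i = g (fun T => if T = X then 1 else 0) x *
        g (fun T => if T = Y then 1 else 0) y *
        ∏ z ∈ ({x, y} : Finset (Fin n))ᶜ, g (H z X Y) z := by
    intro X Y g
    rw [← Finset.prod_mul_prod_compl ({x, y} : Finset (Fin n)), Finset.prod_pair hxy]
    congr 1
    · simp [φ, hxy.symm]
    · refine Finset.prod_congr rfl fun z hz => ?_
      simp only [Finset.mem_compl, Finset.mem_insert, Finset.mem_singleton, not_or] at hz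
      simp [φ, hz.1, hz.2]
  have h1 : ∀ S : Fin n → KeyRing P K, Φ (S x) (S y) *
      ∏ z ∈ ({x, y} : Finset (Fin n))ᶜ, H z (S x) (S y) (S z) =
      ∑ X, ∑ Y, Φ X Y * ∏ i, φ X Y i (S i) := by
    intro S
    simp only [fun X Y => hsplit X Y (fun f i => f (S i))]
    rw [Finset.sum_eq_single (S x), Finset.sum_eq_single (S y)]
    · simp
    · intro Y _ hY; simp [hY.symm]
    · simp
    · intro X _ hX; simp [hX.symm]
    · simp
  simp only [h1]
  rw [integral_finsetSum _ fun _ _ => Integrable.of_finite, keyAvg, Finset.mul_sum]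
  refine Finset.sum_congr rfl fun X _ => ?_
  rw [integral_finsetSum _ fun _ _ => Integrable.of_finite, keyAvg, Finset.mul_sum,
    Finset.mul_sum]
  refine Finset.sum_congr rfl fun Y _ => ?_
  rw [integral_const_mul, integral_fintype_prod_eq_prod]
  simp only [integral_uniformKeyMeasure]
  rw [hsplit X Y (fun f _ => keyAvg f)]
  simp [keyAvg]
  ring

/-- Conditionally on the key rings of `x` and `y`, the remaining nodes contribute independent
factors to an expectation of product form. -/
theorem integral_gonMeasure {n P K : ℕ} (hKP : K ≤ P) {p : ℝ} (hp0 : 0 ≤ p) (hp1 : p ≤ 1)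
    {x y : Fin n} (hxy : x ≠ y) (Φ : KeyRing P K → KeyRing P K → ℝ)
    (F G : Fin n → KeyRing P K → KeyRing P K → KeyRing P K → Bool → ℝ) :
    ∫ ω, Φ (ω.1 x) (ω.1 y) * ∏ z ∈ ({x, y} : Finset (Fin n))ᶜ,
        (F z (ω.1 x) (ω.1 y) (ω.1 z) (ω.2 s(x, z)) * G z (ω.1 x) (ω.1 y) (ω.1 z) (ω.2 s(y, z)))
        ∂(gonMeasure n K P p) =
      keyAvg fun X => keyAvg fun Y => Φ X Y * ∏ z ∈ ({x, y} : Finset (Fin n))ᶜ,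
        keyAvg fun T => bernAvg p (F z X Y T) * bernAvg p (G z X Y T) := by
  have := isProbabilityMeasure_uniformKeyMeasure hKP
  have := isProbabilityMeasure_bern hp0 hp1
  rw [gonMeasure, integral_prod _ Integrable.of_finite,
    ← integral_key_pi hKP hxy Φ (fun z X Y T => bernAvg p (F z X Y T) * bernAvg p (G z X Y T))]
  refine integral_congr_ae (Filter.Eventually.of_forall fun S => ?_)
  simp only
  rw [integral_const_mul]
  congr 1
  let f : Fin n × Bool → Bool → ℝ := fun i =>
    if i.2 then F i.1 (S x) (S y) (S i.1) else G i.1 (S x) (S y) (S i.1)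
  have h := integral_pi_prod_comp_of_injOn (bern p)
    (({x, y} : Finset (Fin n))ᶜ ×ˢ (Finset.univ : Finset Bool))
    (fun i : Fin n × Bool => s(if i.2 then x else y, i.1)) (by
      rintro ⟨z, b⟩ hz ⟨w, c⟩ hw h
      simp only [Finset.coe_product, Finset.coe_compl, Set.mem_prod, Set.mem_compl_iff,
        Finset.coe_insert, Finset.coe_singleton, Set.mem_insert_iff, Set.mem_singleton_iff,
        not_or] at hz hw
      simp only [Sym2.eq_iff] at h
      cases b <;> cases c <;> simp_all) f
  simp only [Finset.prod_product, Fintype.prod_bool, integral_bern hp0 hp1] at h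
  simpa [f] using h

theorem isProbabilityMeasure_gonMeasure {n P K : ℕ} (hKP : K ≤ P) {p : ℝ} (hp0 : 0 ≤ p)
    (hp1 : p ≤ 1) : IsProbabilityMeasure (gonMeasure n K P p) := by
  have := isProbabilityMeasure_uniformKeyMeasure hKP
  have := isProbabilityMeasure_bern hp0 hp1
  unfold gonMeasure
  infer_instance

open Classical in
/-- The neighbours of `v` other than `x` and `y`. -/
def outerNeighbors {n : ℕ} (G : SimpleGraph (Fin n)) (x y v : Fin n) : Finset (Fin n) :=
  (({x, y} : Finset (Fin n))ᶜ).filter (fun z => G.Adj v z)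

open Classical in
theorem gDeg_eq_card_outerNeighbors {n : ℕ} (G : SimpleGraph (Fin n)) {x y : Fin n} :
    gDeg G x = (outerNeighbors G x y x).card + if G.Adj x y then 1 else 0 := by
  have h1 : gDeg G x = (Finset.univ.filter (fun z => G.Adj x z)).card := by
    rw [gDeg, Nat.card_eq_fintype_card, Fintype.card_subtype]
  have h2 : (Finset.univ.filter (fun z => G.Adj x z)) =
      outerNeighbors G x y x ∪ (if G.Adj x y then {y} else ∅) := by
    ext z
    by_cases h : G.Adj x y
    · simp only [h, if_true, outerNeighbors, Finset.mem_filter, Finset.mem_univ, true_and,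
        Finset.mem_union, Finset.mem_compl, Finset.mem_insert, Finset.mem_singleton, not_or]
      constructor
      · intro hz
        by_cases hzy : z = y
        · exact Or.inr hzy
        · exact Or.inl ⟨⟨hz.ne', hzy⟩, hz⟩
      · rintro (hz | rfl)
        exacts [hz.2, h]
    · simp only [h, if_false, outerNeighbors, Finset.mem_filter, Finset.mem_univ, true_and,
        Finset.union_empty, Finset.mem_compl, Finset.mem_insert, Finset.mem_singleton, not_or]
      constructor
      · intro hz
        exact ⟨⟨hz.ne', fun hzy => h (hzy ▸ hz)⟩, hz⟩
      · exact fun hz => hz.2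
  rw [h1, h2, Finset.card_union_of_disjoint]
  · split_ifs <;> simp
  · split_ifs <;> simp [outerNeighbors]

theorem outerNeighbors_comm {n : ℕ} (G : SimpleGraph (Fin n)) (x y v : Fin n) :
    outerNeighbors G x y v = outerNeighbors G y x v := by
  unfold outerNeighbors
  rw [Finset.pair_comm]

theorem meetInd_eq_zero_or_one {P K : ℕ} (X T : KeyRing P K) :
    meetInd X T = 0 ∨ meetInd X T = 1 := by
  unfold meetInd; split_ifs <;> simp

theorem gonGraph_adj_iff {n P K : ℕ} (ω : GonSpace n K P) {i j : Fin n} (hij : i ≠ j) :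
    (gonGraph ω).Adj i j ↔ meetInd (ω.1 i) (ω.1 j) = 1 ∧ ω.2 s(i, j) = true := by
  have : meetInd (ω.1 i) (ω.1 j) = 1 ↔ ((ω.1 i).1 ∩ (ω.1 j).1).Nonempty := by
    unfold meetInd
    split_ifs with h <;> simp only [h, iff_false]
    norm_num
  rw [this]
  exact and_iff_right hij

theorem mem_degEvent {n P K : ℕ} {x : Fin n} {ℓ : ℕ} {ω : GonSpace n K P} :
    ω ∈ degEvent n K P x ℓ ↔ gDeg (gonGraph ω) x = ℓ := by
  simp [degEvent]

theorem mem_edgeEvent {n P K : ℕ} {x y : Fin n} {ω : GonSpace n K P} :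
    ω ∈ edgeEvent n K P x y ↔ (gonGraph ω).Adj x y := by
  simp [edgeEvent]

theorem card_compl_pair {n : ℕ} {x y : Fin n} (hxy : x ≠ y) :
    (({x, y} : Finset (Fin n))ᶜ).card = n - 2 := by
  rw [Finset.card_compl, Finset.card_pair hxy, Fintype.card_fin]

theorem keyAvg_one_sub_mul_one_sub {P K : ℕ} (hKP : K ≤ P) (t : ℝ) (X Y : KeyRing P K) :
    keyAvg (fun T => (1 - t * meetInd X T) * (1 - t * meetInd Y T)) =
      1 - 2 * (t * psf K P) + t ^ 2 * bothMeet X Y := by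
  have : ∀ T : KeyRing P K, (1 - t * meetInd X T) * (1 - t * meetInd Y T) =
      (1 - t * meetInd X T) - t * meetInd Y T + t ^ 2 * (meetInd X T * meetInd Y T) := by
    intro T; ring
  simp only [this]
  rw [keyAvg_add, keyAvg_sub, keyAvg_sub, keyAvg_const hKP, keyAvg_const_mul, keyAvg_const_mul,
    keyAvg_const_mul, keyAvg_meetInd hKP, keyAvg_meetInd hKP, bothMeet]
  ring

theorem prod_outer_eq_pow {n P K : ℕ} (ω : GonSpace n K P) {x y v : Fin n}
    (hv : v = x ∨ v = y) (s : ℝ) :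
    ∏ z ∈ ({x, y} : Finset (Fin n))ᶜ,
      (if ω.2 s(v, z) then 1 - (1 - s) * meetInd (ω.1 v) (ω.1 z) else 1) =
      s ^ (outerNeighbors (gonGraph ω) x y v).card := by
  classical
  rw [← Finset.prod_const, outerNeighbors, Finset.prod_filter]
  refine Finset.prod_congr rfl fun z hz => ?_
  have hvz : v ≠ z := by
    rintro rfl
    simp only [Finset.mem_compl, Finset.mem_insert, Finset.mem_singleton] at hz
    exact hz hv
  rw [gonGraph_adj_iff ω hvz]
  rcases meetInd_eq_zero_or_one (ω.1 v) (ω.1 z) with h | h <;>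
    by_cases hb : ω.2 s(v, z) = true <;> simp [h, hb]

theorem measureReal_adjacent_le {n P K : ℕ} (hKP : K ≤ P) {p : ℝ} (hp0 : 0 ≤ p) (hp1 : p ≤ 1)
    {x y : Fin n} (hxy : x ≠ y) (ℓ : ℕ) {s : ℝ} (hs0 : 0 < s) :
    (gonMeasure n K P p).real (degEvent n K P x ℓ ∩ degEvent n K P y ℓ ∩
        edgeEvent n K P x y) ≤
      (s⁻¹) ^ (2 * (ℓ - 1)) * keyAvg fun X : KeyRing P K => keyAvg fun Y : KeyRing P K =>
        meetInd X Y * (1 - 2 * (p * (1 - s) * psf K P) +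
          (p * (1 - s)) ^ 2 * bothMeet X Y) ^ (n - 2) := by
  have := isProbabilityMeasure_gonMeasure (n := n) hKP hp0 hp1
  have hint := integral_gonMeasure hKP hp0 hp1 hxy meetInd
    (fun _ X _ T b => if b then 1 - (1 - s) * meetInd X T else 1)
    (fun _ _ Y T b => if b then 1 - (1 - s) * meetInd Y T else 1)
  have hb : ∀ X T : KeyRing P K,
      bernAvg p (fun b => if b then 1 - (1 - s) * meetInd X T else 1) =
        1 - p * (1 - s) * meetInd X T := by
    intro X T
    simp [bernAvg]
    ring
  simp only [hb, keyAvg_one_sub_mul_one_sub hKP, Finset.prod_const, card_compl_pair hxy] at hint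
  rw [← hint, ← integral_const_mul, ← integral_indicator_one (MeasurableSet.of_discrete)]
  refine integral_mono Integrable.of_finite Integrable.of_finite fun ω => ?_
  simp only [Finset.prod_mul_distrib]
  rw [prod_outer_eq_pow ω (Or.inl rfl), prod_outer_eq_pow ω (Or.inr rfl)]
  have hm : 0 ≤ meetInd (ω.1 x) (ω.1 y) := by
    rcases meetInd_eq_zero_or_one (ω.1 x) (ω.1 y) with h | h <;> simp [h]
  by_cases hω : ω ∈ degEvent n K P x ℓ ∩ degEvent n K P y ℓ ∩ edgeEvent n K P x y
  · rw [Set.indicator_of_mem hω]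
    obtain ⟨⟨hx, hy⟩, hE⟩ := hω
    rw [mem_degEvent] at hx hy
    rw [mem_edgeEvent] at hE
    rw [gDeg_eq_card_outerNeighbors (y := y), if_pos hE] at hx
    rw [gDeg_eq_card_outerNeighbors (y := x), if_pos hE.symm, outerNeighbors_comm] at hy
    rw [((gonGraph_adj_iff ω hxy).mp hE).1, show (outerNeighbors (gonGraph ω) x y x).card = ℓ - 1
      by omega, show (outerNeighbors (gonGraph ω) x y y).card = ℓ - 1 by omega, one_mul,
      ← pow_add, ← two_mul, ← mul_pow, inv_mul_cancel₀ hs0.ne', one_pow]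
    rfl
  · rw [Set.indicator_of_notMem hω]
    positivity

theorem two_node_factor {a b : Prop} [Decidable a] [Decidable b] {u v : ℝ} {c d : Bool}
    (hu : u = 0 ∨ u = 1) (hv : v = 0 ∨ v = 1) (hab : a → ¬ b)
    (h : (if a then (if c then u * (1 - v) else 0)
        else if b then 1 - u else (if c then 1 - u else 1)) *
      (if a then 1 else if b then (if d then v else 0) else (if d then 1 - v else 1)) ≠ 0) :
    (a ↔ u = 1 ∧ c = true) ∧ (b ↔ v = 1 ∧ d = true) ∧
      (if a then (if c then u * (1 - v) else 0)
        else if b then 1 - u else (if c then 1 - u else 1)) *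
      (if a then 1 else if b then (if d then v else 0) else (if d then 1 - v else 1)) = 1 := by
  rcases hu with rfl | rfl <;> rcases hv with rfl | rfl <;> by_cases ha : a <;>
    by_cases hb : b <;> cases c <;> cases d <;> simp_all

theorem le_measureReal_nonadjacent {n P K : ℕ} (hKP : K ≤ P) {p : ℝ} (hp0 : 0 ≤ p) (hp1 : p ≤ 1)
    {x y : Fin n} (hxy : x ≠ y) (ℓ : ℕ) (hpe : 2 * pef K P p ≤ 1)
    (hq : ∀ X Y : KeyRing P K, meetInd X Y = 0 → bothMeet X Y ≤ psf K P / 2) :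
    ((n - 2).choose ℓ : ℝ) * ((n - 2 - ℓ).choose ℓ : ℝ) * (1 - psf K P) *
        (pef K P p / 2) ^ (2 * ℓ) * (1 - 2 * pef K P p) ^ (n - 2) ≤
      (gonMeasure n K P p).real (degEvent n K P x ℓ ∩ degEvent n K P y ℓ ∩
        (edgeEvent n K P x y)ᶜ) := by
  classical
  have := isProbabilityMeasure_gonMeasure (n := n) hKP hp0 hp1
  have hps := psf_nonneg hKP
  have hpe0 : 0 ≤ pef K P p := mul_nonneg hp0 hps
  set V : Finset (Fin n) := ({x, y} : Finset (Fin n))ᶜ with hV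
  have hVc : V.card = n - 2 := card_compl_pair hxy
  let F : Finset (Fin n) → Finset (Fin n) → Fin n → KeyRing P K → KeyRing P K → KeyRing P K →
      Bool → ℝ := fun A B z X Y T b =>
    if z ∈ A then (if b then meetInd X T * (1 - meetInd Y T) else 0)
    else if z ∈ B then 1 - meetInd X T else (if b then 1 - meetInd X T else 1)
  let G : Finset (Fin n) → Finset (Fin n) → Fin n → KeyRing P K → KeyRing P K → KeyRing P K →
      Bool → ℝ := fun A B z X Y T b =>
    if z ∈ A then 1
    else if z ∈ B then (if b then meetInd Y T else 0) else (if b then 1 - meetInd Y T else 1)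
  let W : Finset (Fin n) → Finset (Fin n) → GonSpace n K P → ℝ := fun A B ω =>
    (1 - meetInd (ω.1 x) (ω.1 y)) * ∏ z ∈ V,
      (F A B z (ω.1 x) (ω.1 y) (ω.1 z) (ω.2 s(x, z)) *
        G A B z (ω.1 x) (ω.1 y) (ω.1 z) (ω.2 s(y, z)))
  have hW : ∀ A ∈ V.powersetCard ℓ, ∀ B ∈ (V \ A).powersetCard ℓ,
      (1 - psf K P) * (pef K P p / 2) ^ (2 * ℓ) * (1 - 2 * pef K P p) ^ (n - 2) ≤
        ∫ ω, W A B ω ∂(gonMeasure n K P p) := by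
    intro A hA B hB
    rw [Finset.mem_powersetCard] at hA hB
    have hdisj : Disjoint A B := by
      rw [Finset.disjoint_left]
      intro z hzA hzB
      exact (Finset.mem_sdiff.mp (hB.1 hzB)).2 hzA
    have hABV : A ∪ B ⊆ V := Finset.union_subset hA.1 (hB.1.trans Finset.sdiff_subset)
    simp only [W]
    rw [integral_gonMeasure hKP hp0 hp1 hxy (fun X Y => 1 - meetInd X Y) (F A B) (G A B)]
    have hconst : (1 - psf K P) * (pef K P p / 2) ^ (2 * ℓ) * (1 - 2 * pef K P p) ^ (n - 2) =
        keyAvg fun X : KeyRing P K => keyAvg fun Y : KeyRing P K => (1 - meetInd X Y) *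
          ((pef K P p / 2) ^ (2 * ℓ) * (1 - 2 * pef K P p) ^ (n - 2)) := by
      simp only [keyAvg_mul_const, keyAvg_sub, keyAvg_const hKP, keyAvg_meetInd hKP]
      ring
    rw [hconst]
    refine keyAvg_mono fun X => keyAvg_mono fun Y => ?_
    rcases meetInd_eq_zero_or_one X Y with hXY | hXY
    swap
    · simp [hXY]
    rw [hXY, sub_zero, one_mul, one_mul]
    have hqXY := hq X Y hXY
    have hprod : (pef K P p / 2) ^ (2 * ℓ) * (1 - 2 * pef K P p) ^ (n - 2) =
        ∏ z ∈ V, ((if z ∈ A ∪ B then pef K P p / 2 else 1) * (1 - 2 * pef K P p)) := by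
      rw [Finset.prod_mul_distrib, Finset.prod_const, hVc, ← Finset.prod_filter,
        Finset.prod_const, Finset.filter_mem_eq_inter, Finset.inter_eq_right.mpr hABV,
        Finset.card_union_of_disjoint hdisj, hA.2, hB.2, two_mul]
    rw [hprod]
    refine Finset.prod_le_prod (fun z _ => ?_) fun z _ => ?_
    · refine mul_nonneg ?_ (by linarith)
      split_ifs <;> [positivity; norm_num]
    · have hone : ∀ X Y : KeyRing P K, bothMeet X Y ≤ psf K P / 2 → pef K P p / 2 *
          (1 - 2 * pef K P p) ≤ keyAvg fun T => p * (meetInd X T * (1 - meetInd Y T)) := by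
        intro X Y hXY
        have : ∀ T, p * (meetInd X T * (1 - meetInd Y T)) =
            p * meetInd X T - p * (meetInd X T * meetInd Y T) := fun T => by ring
        simp only [this, keyAvg_sub, keyAvg_const_mul, keyAvg_meetInd hKP]
        have h1 : pef K P p / 2 ≤ p * psf K P - p * bothMeet X Y := by
          unfold pef; nlinarith
        have h2 : pef K P p / 2 * (1 - 2 * pef K P p) ≤ pef K P p / 2 := by nlinarith
        exact h2.trans h1
      by_cases hzA : z ∈ A
      · have := hone X Y hqXY
        simpa [F, G, hzA, bernAvg] using this
      · by_cases hzB : z ∈ B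
        · have := hone Y X (by
            have : bothMeet Y X = bothMeet X Y := by simp [bothMeet, mul_comm]
            rwa [this])
          have h3 : ∀ T, bernAvg p (F A B z X Y T) * bernAvg p (G A B z X Y T) =
              p * (meetInd Y T * (1 - meetInd X T)) := by
            intro T
            simp [F, G, hzA, hzB, bernAvg]
            ring
          simpa [h3, hzB] using this
        · have h3 : ∀ T, bernAvg p (F A B z X Y T) * bernAvg p (G A B z X Y T) =
              (1 - p * meetInd X T) * (1 - p * meetInd Y T) := by
            intro T
            simp [F, G, hzA, hzB, bernAvg]
            ring
          simp only [h3, keyAvg_one_sub_mul_one_sub hKP, Finset.mem_union, hzA, hzB, or_self,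
            if_false, one_mul]
          have := mul_nonneg (sq_nonneg p) (bothMeet_nonneg X Y)
          unfold pef
          linarith
  set D := degEvent n K P x ℓ ∩ degEvent n K P y ℓ ∩ (edgeEvent n K P x y)ᶜ with hD
  have hpt : ∀ ω, ∑ A ∈ V.powersetCard ℓ, ∑ B ∈ (V \ A).powersetCard ℓ, W A B ω ≤
      D.indicator 1 ω := by
    intro ω
    have hD0 : (0 : ℝ) ≤ D.indicator 1 ω := Set.indicator_nonneg (fun _ _ => zero_le_one) _
    have hle : ∀ A ∈ V.powersetCard ℓ, ∀ B ∈ (V \ A).powersetCard ℓ, W A B ω ≤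
        if A = outerNeighbors (gonGraph ω) x y x then
          (if B = outerNeighbors (gonGraph ω) x y y then D.indicator 1 ω else 0) else 0 := by
      intro A hA B hB
      rw [Finset.mem_powersetCard] at hA hB
      by_cases h0 : W A B ω = 0
      · rw [h0]; split_ifs <;> simp [hD0]
      have hm0 : meetInd (ω.1 x) (ω.1 y) = 0 := by
        rcases meetInd_eq_zero_or_one (ω.1 x) (ω.1 y) with h | h
        · exact h
        · simp [W, h] at h0
      have hne : ∀ z ∈ V, F A B z (ω.1 x) (ω.1 y) (ω.1 z) (ω.2 s(x, z)) *
          G A B z (ω.1 x) (ω.1 y) (ω.1 z) (ω.2 s(y, z)) ≠ 0 := by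
        have : ∏ z ∈ V, (F A B z (ω.1 x) (ω.1 y) (ω.1 z) (ω.2 s(x, z)) *
          G A B z (ω.1 x) (ω.1 y) (ω.1 z) (ω.2 s(y, z))) ≠ 0 := right_ne_zero_of_mul h0
        exact Finset.prod_ne_zero_iff.mp this
      have hfac : ∀ z ∈ V, (z ∈ A ↔ (gonGraph ω).Adj x z) ∧ (z ∈ B ↔ (gonGraph ω).Adj y z) ∧
          F A B z (ω.1 x) (ω.1 y) (ω.1 z) (ω.2 s(x, z)) *
            G A B z (ω.1 x) (ω.1 y) (ω.1 z) (ω.2 s(y, z)) = 1 := by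
        intro z hz
        have h := hne z hz
        simp only [hV, Finset.mem_compl, Finset.mem_insert, Finset.mem_singleton, not_or] at hz
        rw [gonGraph_adj_iff ω (Ne.symm hz.1), gonGraph_adj_iff ω (Ne.symm hz.2)]
        have hAB : z ∈ A → z ∉ B := fun hzA hzB => (Finset.mem_sdiff.mp (hB.1 hzB)).2 hzA
        exact two_node_factor (meetInd_eq_zero_or_one _ _) (meetInd_eq_zero_or_one _ _) hAB h
      have hA' : A = outerNeighbors (gonGraph ω) x y x := by
        ext z
        simp only [outerNeighbors, Finset.mem_filter]
        constructor
        · intro hz; exact ⟨hA.1 hz, ((hfac z (hA.1 hz)).1).mp hz⟩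
        · intro hz; exact ((hfac z hz.1).1).mpr hz.2
      have hB' : B = outerNeighbors (gonGraph ω) x y y := by
        have hBV := hB.1.trans Finset.sdiff_subset
        ext z
        simp only [outerNeighbors, Finset.mem_filter]
        constructor
        · intro hz; exact ⟨hBV hz, ((hfac z (hBV hz)).2.1).mp hz⟩
        · intro hz; exact ((hfac z hz.1).2.1).mpr hz.2
      have hnadj : ¬ (gonGraph ω).Adj x y := by
        rw [gonGraph_adj_iff ω hxy, hm0]; simp
      have hmem : ω ∈ D := by
        refine ⟨⟨?_, ?_⟩, ?_⟩
        · rw [mem_degEvent, gDeg_eq_card_outerNeighbors (y := y), if_neg hnadj, ← hA', hA.2, add_zero]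
        · rw [mem_degEvent, gDeg_eq_card_outerNeighbors (y := x),
            if_neg (fun h => hnadj h.symm), outerNeighbors_comm, ← hB', hB.2, add_zero]
        · rw [Set.mem_compl_iff, mem_edgeEvent]; exact hnadj
      rw [if_pos hA', if_pos hB', Set.indicator_of_mem hmem]
      simp only [W, hm0]
      rw [Finset.prod_eq_one fun z hz => (hfac z hz).2.2]
      simp
    calc _ ≤ ∑ A ∈ V.powersetCard ℓ, ∑ B ∈ (V \ A).powersetCard ℓ,
          (if A = outerNeighbors (gonGraph ω) x y x then
          (if B = outerNeighbors (gonGraph ω) x y y then D.indicator 1 ω else 0) else (0 : ℝ)) :=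
          Finset.sum_le_sum fun A hA => Finset.sum_le_sum fun B hB => hle A hA B hB
      _ ≤ ∑ A ∈ V.powersetCard ℓ, if A = outerNeighbors (gonGraph ω) x y x then
            D.indicator 1 ω else (0 : ℝ) := by
          refine Finset.sum_le_sum fun A _ => ?_
          split_ifs
          · rw [Finset.sum_ite_eq']
            split_ifs <;> simp [hD0]
          · simp
      _ ≤ _ := by
          rw [Finset.sum_ite_eq']
          split_ifs <;> simp [hD0]
  rw [← integral_indicator_one (MeasurableSet.of_discrete)]
  refine le_trans ?_ (integral_mono Integrable.of_finite Integrable.of_finite hpt)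
  rw [integral_finsetSum _ fun _ _ => Integrable.of_finite]
  simp only [fun A => integral_finsetSum (μ := gonMeasure n K P p) ((V \ A).powersetCard ℓ)
    (f := fun B ω => W A B ω) fun _ _ => Integrable.of_finite]
  calc _ = ∑ A ∈ V.powersetCard ℓ, ∑ B ∈ (V \ A).powersetCard ℓ,
        ((1 - psf K P) * (pef K P p / 2) ^ (2 * ℓ) * (1 - 2 * pef K P p) ^ (n - 2)) := by
        have : ∀ A ∈ V.powersetCard ℓ, ((V \ A).powersetCard ℓ).card = (n - 2 - ℓ).choose ℓ := by
          intro A hA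
          rw [Finset.mem_powersetCard] at hA
          rw [Finset.card_powersetCard, Finset.card_sdiff_of_subset hA.1, hVc, hA.2]
        simp only [Finset.sum_const, nsmul_eq_mul]
        rw [Finset.sum_congr rfl fun A hA => by rw [this A hA], Finset.sum_const,
          Finset.card_powersetCard, hVc, nsmul_eq_mul]
        ring
    _ ≤ _ := Finset.sum_le_sum fun A hA => Finset.sum_le_sum fun B hB => hW A hA B hB

theorem exp_neg_sub_le_one_sub {x : ℝ} (hx : x ≤ 1 / 2) :
    Real.exp (-x - 2 * x ^ 2) ≤ 1 - x := by
  have h1 : 0 < 1 - x := by linarith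
  have h2 : (1 - x)⁻¹ ≤ Real.exp (x + 2 * x ^ 2) := by
    refine le_trans ?_ (Real.add_one_le_exp _)
    rw [inv_le_iff_one_le_mul₀ h1]
    nlinarith [mul_nonneg (sq_nonneg x) (by linarith : 0 ≤ 1 - 2 * x)]
  rw [show -x - 2 * x ^ 2 = -(x + 2 * x ^ 2) by ring, Real.exp_neg]
  exact inv_le_of_inv_le₀ h1 h2

theorem half_pow_div_factorial_le_choose {n m r : ℕ} (h : n + 2 * r ≤ 2 * m + 2) :
    ((n : ℝ) / 2) ^ r / r.factorial ≤ m.choose r := by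
  refine le_trans ?_ (Nat.pow_le_choose r m)
  rcases Nat.eq_zero_or_pos n with rfl | hn
  · gcongr
    simp
  gcongr
  rw [Nat.cast_sub (by omega)]
  have : ((n + 2 * r : ℕ) : ℝ) ≤ (2 * m + 2 : ℕ) := by exact_mod_cast h
  push_cast at this ⊢
  linarith

theorem measureReal_adjacent_le_exp {n P K : ℕ} (hKP : K ≤ P) (hP : 0 < P) {p : ℝ}
    (hp0 : 0 ≤ p) (hp1 : p ≤ 1) {x y : Fin n} (hxy : x ≠ y) (ℓ : ℕ) {ε : ℝ} (hε : 0 < ε)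
    (ha : ε ≤ n * pef K P p) (hps : psf K P ≤ 1 / 11) (hsq : n * pef K P p ^ 2 ≤ 1) :
    (gonMeasure n K P p).real (degEvent n K P x ℓ ∩ degEvent n K P y ℓ ∩
        edgeEvent n K P x y) ≤
      (n * pef K P p / ε) ^ (2 * (ℓ - 1)) *
        (Real.exp (2 * ε + 2 - 2 * ((n - 2 : ℕ) * pef K P p)) *
        (Real.exp (Real.exp (n * p ^ 2 * ((K : ℝ) / P)) * ((K : ℝ) ^ 2 / P)) - 1 + psf K P)) := by
  set a := n * pef K P p with ha_def
  have ha0 : 0 < a := hε.trans_le ha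
  have hs0 : 0 < ε / a := by positivity
  have hs1 : ε / a ≤ 1 := (div_le_one ha0).mpr ha
  have hps0 := psf_nonneg hKP
  have hpe0 : 0 ≤ pef K P p := mul_nonneg hp0 hps0
  set r := (K : ℝ) ^ 2 / P with hr
  have hr0 : 0 ≤ r := by positivity
  have hrps : r ≤ 1.1 * psf K P := by
    refine (sq_div_le_psf_div hP (by linarith)).trans ?_
    rw [div_le_iff₀ (by linarith)]
    nlinarith
  have hMn : ((n - 2 : ℕ) : ℝ) ≤ n := by exact_mod_cast Nat.sub_le n 2
  set M : ℝ := ((n - 2 : ℕ) : ℝ) with hM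
  have hM0 : 0 ≤ M := by positivity
  set lam := n * p ^ 2 * ((K : ℝ) / P) with hlam
  have hlam0 : 0 ≤ lam := by positivity
  refine (measureReal_adjacent_le hKP hp0 hp1 hxy ℓ hs0).trans ?_
  rw [inv_div]
  refine mul_le_mul_of_nonneg_left ?_ (by positivity)
  have hb : 0 ≤ Real.exp lam - 1 := by linarith [Real.one_le_exp hlam0]
  have hpt : ∀ X Y : KeyRing P K, meetInd X Y * (1 - 2 * (p * (1 - ε / a) * psf K P) +
      (p * (1 - ε / a)) ^ 2 * bothMeet X Y) ^ (n - 2) ≤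
      Real.exp (2 * ε + 2 - 2 * (M * pef K P p)) *
        (meetInd X Y * (1 + (Real.exp lam - 1)) ^ (X.1 ∩ Y.1).card) := by
    intro X Y
    set s := ε / a with hs
    have hm0 : 0 ≤ meetInd X Y := by
      rcases meetInd_eq_zero_or_one X Y with h | h <;> simp [h]
    have hbase0 : 0 ≤ 1 - 2 * (p * (1 - s) * psf K P) + (p * (1 - s)) ^ 2 * bothMeet X Y := by
      have ht0 : 0 ≤ p * (1 - s) := mul_nonneg hp0 (by linarith)
      have ht1 : p * (1 - s) ≤ 1 := by nlinarith
      have := mul_nonneg (sq_nonneg (p * (1 - s))) (bothMeet_nonneg X Y)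
      nlinarith
    have hq := bothMeet_le hKP X Y
    have hq0 := bothMeet_nonneg X Y
    have hbase : 1 - 2 * (p * (1 - s) * psf K P) + (p * (1 - s)) ^ 2 * bothMeet X Y ≤
        Real.exp (-2 * pef K P p + 2 * pef K P p * s +
          p ^ 2 * (r ^ 2 + (X.1 ∩ Y.1).card * ((K : ℝ) / P))) := by
      refine le_trans ?_ (Real.add_one_le_exp _)
      have h1 : (p * (1 - s)) ^ 2 ≤ p ^ 2 := by
        apply pow_le_pow_left₀ (mul_nonneg hp0 (by linarith))
        nlinarith
      have h2 := mul_le_mul h1 hq hq0 (sq_nonneg p)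
      unfold pef
      linarith
    have hpow := pow_le_pow_left₀ hbase0 hbase (n - 2)
    rw [← Real.exp_nat_mul, ← hM] at hpow
    have h1 : M * (2 * pef K P p * s) ≤ 2 * ε := by
      calc M * (2 * pef K P p * s) ≤ n * (2 * pef K P p * s) := by gcongr
        _ = 2 * (a * s) := by rw [ha_def]; ring
        _ = 2 * ε := by rw [hs, mul_div_cancel₀ _ ha0.ne']
    have h2 : M * (p ^ 2 * r ^ 2) ≤ 2 := by
      calc M * (p ^ 2 * r ^ 2) ≤ n * (p ^ 2 * (1.1 * psf K P) ^ 2) := by gcongr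
        _ = 1.21 * (n * pef K P p ^ 2) := by unfold pef; ring
        _ ≤ 2 := by linarith
    have h3 : M * (p ^ 2 * ((X.1 ∩ Y.1).card * ((K : ℝ) / P))) ≤ (X.1 ∩ Y.1).card * lam := by
      calc _ ≤ n * (p ^ 2 * ((X.1 ∩ Y.1).card * ((K : ℝ) / P))) := by gcongr
        _ = _ := by rw [hlam]; ring
    have h4 : Real.exp (M * (-2 * pef K P p + 2 * pef K P p * s +
          p ^ 2 * (r ^ 2 + (X.1 ∩ Y.1).card * ((K : ℝ) / P)))) ≤
        Real.exp (2 * ε + 2 - 2 * (M * pef K P p)) *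
          (1 + (Real.exp lam - 1)) ^ (X.1 ∩ Y.1).card := by
      rw [add_sub_cancel, ← Real.exp_nat_mul, ← Real.exp_add]
      apply Real.exp_le_exp.mpr
      linarith
    calc _ ≤ meetInd X Y * (Real.exp (2 * ε + 2 - 2 * (M * pef K P p)) *
          (1 + (Real.exp lam - 1)) ^ (X.1 ∩ Y.1).card) :=
          mul_le_mul_of_nonneg_left (hpow.trans h4) hm0
      _ = _ := by ring
  calc _ ≤ keyAvg fun X : KeyRing P K => keyAvg fun Y : KeyRing P K =>
        Real.exp (2 * ε + 2 - 2 * (M * pef K P p)) *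
        (meetInd X Y * (1 + (Real.exp lam - 1)) ^ (X.1 ∩ Y.1).card) :=
        keyAvg_mono fun X => keyAvg_mono fun Y => hpt X Y
    _ ≤ keyAvg fun X : KeyRing P K => Real.exp (2 * ε + 2 - 2 * (M * pef K P p)) *
        (Real.exp (Real.exp lam * r) - 1 + psf K P) := by
        refine keyAvg_mono fun X => ?_
        rw [keyAvg_const_mul]
        refine mul_le_mul_of_nonneg_left ?_ (Real.exp_pos _).le
        refine (keyAvg_meetInd_mul_pow_card_inter_le hKP X hb).trans ?_
        have : Real.exp ((Real.exp lam - 1) * r) ≤ Real.exp (Real.exp lam * r) :=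
          Real.exp_le_exp.mpr (by nlinarith)
        linarith
    _ = _ := keyAvg_const hKP _

theorem exp_le_measureReal_nonadjacent {n P K : ℕ} (hKP : K ≤ P) (hP : 0 < P) {p : ℝ}
    (hp0 : 0 ≤ p) (hp1 : p ≤ 1) {x y : Fin n} (hxy : x ≠ y) {ℓ : ℕ} (hn : 4 * ℓ + 2 ≤ n)
    (hps : psf K P ≤ 1 / 11) (hsq : n * pef K P p ^ 2 ≤ 1) :
    (n * pef K P p / 4) ^ (2 * ℓ) / (2 * (ℓ.factorial : ℝ) ^ 2) *
        Real.exp (-8 - 2 * ((n - 2 : ℕ) * pef K P p)) ≤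
      (gonMeasure n K P p).real (degEvent n K P x ℓ ∩ degEvent n K P y ℓ ∩
        (edgeEvent n K P x y)ᶜ) := by
  have hps0 := psf_nonneg hKP
  have hpe0 : 0 ≤ pef K P p := mul_nonneg hp0 hps0
  have hpeps : pef K P p ≤ psf K P := by unfold pef; nlinarith
  have hMn : ((n - 2 : ℕ) : ℝ) ≤ n := by exact_mod_cast Nat.sub_le n 2
  refine le_trans ?_ (le_measureReal_nonadjacent hKP hp0 hp1 hxy ℓ (by linarith) ?_)
  · have h1 := half_pow_div_factorial_le_choose (n := n) (m := n - 2) (r := ℓ) (by omega)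
    have h2 := half_pow_div_factorial_le_choose (n := n) (m := n - 2 - ℓ) (r := ℓ) (by omega)
    have h3 : Real.exp (-8 - 2 * ((n - 2 : ℕ) * pef K P p)) ≤
        (1 - 2 * pef K P p) ^ (n - 2) := by
      refine le_trans ?_ (pow_le_pow_left₀ (Real.exp_pos _).le
        (exp_neg_sub_le_one_sub (by linarith)) (n - 2))
      rw [← Real.exp_nat_mul]
      apply Real.exp_le_exp.mpr
      have := mul_le_mul_of_nonneg_right hMn (sq_nonneg (pef K P p))
      nlinarith
    have h4 : (1 / 2 : ℝ) ≤ 1 - psf K P := by linarith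
    calc _ = ((n : ℝ) / 2) ^ ℓ / ℓ.factorial * (((n : ℝ) / 2) ^ ℓ / ℓ.factorial) * (1 / 2) *
          (pef K P p / 2) ^ (2 * ℓ) * Real.exp (-8 - 2 * ((n - 2 : ℕ) * pef K P p)) := by
          rw [show n * pef K P p / 4 = (n : ℝ) / 2 * (pef K P p / 2) by ring, mul_pow, two_mul,
            pow_add ((n : ℝ) / 2)]
          have : (ℓ.factorial : ℝ) ≠ 0 := by exact_mod_cast ℓ.factorial_ne_zero
          field_simp
      _ ≤ _ := by gcongr
  · intro X Y hXY
    have hq := bothMeet_le hKP X Y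
    have hempty : X.1 ∩ Y.1 = ∅ := by
      by_contra h
      rw [← ne_eq, ← Finset.nonempty_iff_ne_empty] at h
      simp [meetInd, h] at hXY
    have hrps : (K : ℝ) ^ 2 / P ≤ 1.1 * psf K P := by
      refine (sq_div_le_psf_div hP (by linarith)).trans ?_
      rw [div_le_iff₀ (by linarith)]
      nlinarith
    rw [hempty] at hq
    simp only [Finset.card_empty, Nat.cast_zero, zero_mul, add_zero] at hq
    have h0 : 0 ≤ (K : ℝ) ^ 2 / P := by positivity
    have := pow_le_pow_left₀ h0 hrps 2
    nlinarith

theorem measureReal_adjacent_div_nonadjacent_le {n P K : ℕ} (hKP : K ≤ P) (hP : 0 < P) {p : ℝ}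
    (hp0 : 0 ≤ p) (hp1 : p ≤ 1) {x y : Fin n} (hxy : x ≠ y) {ℓ : ℕ} (hℓ : 1 ≤ ℓ)
    (hn : 4 * ℓ + 2 ≤ n) {ε : ℝ} (hε : 0 < ε) (ha : ε ≤ n * pef K P p)
    (hps : psf K P ≤ 1 / 11) (hsq : n * pef K P p ^ 2 ≤ 1) :
    (gonMeasure n K P p).real (degEvent n K P x ℓ ∩ degEvent n K P y ℓ ∩
        edgeEvent n K P x y) /
      (gonMeasure n K P p).real (degEvent n K P x ℓ ∩ degEvent n K P y ℓ ∩
        (edgeEvent n K P x y)ᶜ) ≤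
      (4 / ε) ^ (2 * ℓ) * (2 * (ℓ.factorial : ℝ) ^ 2) * Real.exp (2 * ε + 10) *
        (Real.exp (Real.exp (n * p ^ 2 * ((K : ℝ) / P)) * ((K : ℝ) ^ 2 / P)) - 1 + psf K P) := by
  have hps0 := psf_nonneg hKP
  set a := n * pef K P p with ha_def
  have ha0 : 0 < a := hε.trans_le ha
  set δ := Real.exp (Real.exp (n * p ^ 2 * ((K : ℝ) / P)) * ((K : ℝ) ^ 2 / P)) - 1 + psf K P
    with hδ
  have hδ0 : 0 ≤ δ := by
    have : 1 ≤ Real.exp (Real.exp (n * p ^ 2 * ((K : ℝ) / P)) * ((K : ℝ) ^ 2 / P)) :=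
      Real.one_le_exp (by positivity)
    linarith
  have hnum := measureReal_adjacent_le_exp hKP hP hp0 hp1 hxy ℓ hε ha hps hsq
  have hden := exp_le_measureReal_nonadjacent hKP hP hp0 hp1 hxy hn hps hsq
  rw [← ha_def] at hnum hden
  rw [← hδ] at hnum
  refine div_le_of_le_mul₀ measureReal_nonneg (by positivity) (hnum.trans ?_)
  refine le_trans ?_ (mul_le_mul_of_nonneg_left hden (by positivity))
  set m : ℝ := ((n - 2 : ℕ) : ℝ) * pef K P p
  have hfac : (0 : ℝ) < ℓ.factorial := by exact_mod_cast ℓ.factorial_pos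
  have hexp : Real.exp (2 * ε + 10) * Real.exp (-8 - 2 * m) = Real.exp (2 * ε + 2 - 2 * m) := by
    rw [← Real.exp_add]; congr 1; ring
  have hpow : (a / ε) ^ (2 * (ℓ - 1)) ≤ (4 / ε) ^ (2 * ℓ) * (a / 4) ^ (2 * ℓ) := by
    rw [← mul_pow, show 4 / ε * (a / 4) = a / ε by ring]
    exact pow_le_pow_right₀ ((one_le_div hε).mpr ha) (by omega)
  calc _ ≤ ((4 / ε) ^ (2 * ℓ) * (a / 4) ^ (2 * ℓ)) *
        (Real.exp (2 * ε + 2 - 2 * m) * δ) := by gcongr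
    _ = _ := by
      rw [← hexp]
      field_simp

theorem tendsto_exp_mul_sq_div {K P : ℕ → ℕ} {p : ℕ → ℝ}
    (hKP : ∀ n, K n ≤ P n) (hp0 : ∀ n, 0 < p n) (hp1 : ∀ n, p n < 1)
    (hps : Tendsto (fun n : ℕ => psf (K n) (P n)) atTop (nhds 0))
    (hK2 : ∀ᶠ n : ℕ in atTop, 2 ≤ K n)
    (hpe : ∀ᶠ n : ℕ in atTop, n * pef (K n) (P n) (p n) ≤ 1.2 * Real.log n) :
    Tendsto (fun n : ℕ => Real.exp (n * p n ^ 2 * ((K n : ℝ) / P n)) * ((K n : ℝ) ^ 2 / P n))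
      atTop (nhds 0) := by
  have hlog : Tendsto (fun n : ℕ => Real.log n) atTop atTop :=
    Real.tendsto_log_atTop.comp tendsto_natCast_atTop_atTop
  have hlim : Tendsto (fun n : ℕ => 1.1 * (Real.exp 1 * psf (K n) (P n)) +
      1.1 * 1.2 * 16 * ((Real.log n / 4) ^ 2 * Real.exp (-(Real.log n / 4)))) atTop (nhds 0) := by
    have h1 := (Real.tendsto_pow_mul_exp_neg_atTop_nhds_zero 2).comp
      (hlog.atTop_div_const (by norm_num : (0 : ℝ) < 4))
    simpa using ((hps.const_mul (Real.exp 1)).const_mul 1.1).add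
      (h1.const_mul (1.1 * 1.2 * 16))
  refine tendsto_of_tendsto_of_tendsto_of_le_of_le' tendsto_const_nhds hlim
    (Eventually.of_forall fun n => by positivity) ?_
  filter_upwards [hps.eventually_le_const (by norm_num : (0 : ℝ) < 1 / 11), hK2, hpe,
    hlog.eventually_gt_atTop 0, eventually_gt_atTop 0] with n hn1 hn2 hn3 hn4 hn0
  have hP : 0 < P n := by have := hKP n; omega
  have hps0 := psf_nonneg (hKP n)
  have hpn := hp0 n
  set L := Real.log n with hL
  set q := psf (K n) (P n) with hq
  have hn0' : (0 : ℝ) < n := by exact_mod_cast hn0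
  have hrps : (K n : ℝ) ^ 2 / P n ≤ 1.1 * q := by
    refine (sq_div_le_psf_div hP (by linarith)).trans ?_
    rw [div_le_iff₀ (by linarith)]
    nlinarith
  have hKr : (K n : ℝ) / P n ≤ 0.55 * q := by
    have h2 : (2 : ℝ) ≤ K n := by exact_mod_cast hn2
    have : (K n : ℝ) ^ 2 / P n = K n * (K n / P n) := by ring
    have h0 : 0 ≤ (K n : ℝ) / P n := by positivity
    nlinarith
  have hlam : n * p n ^ 2 * ((K n : ℝ) / P n) ≤ 3 / 4 * (p n * L) := by
    calc _ ≤ n * p n ^ 2 * (0.55 * q) := by gcongr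
      _ = 0.55 * p n * (n * pef (K n) (P n) (p n)) := by unfold pef; ring
      _ ≤ 0.55 * p n * (1.2 * L) := by gcongr
      _ ≤ _ := by nlinarith [mul_pos hpn hn4]
  have hsecond0 : 0 ≤ 1.1 * 1.2 * 16 * ((L / 4) ^ 2 * Real.exp (-(L / 4))) := by positivity
  have hmain : Real.exp (n * p n ^ 2 * ((K n : ℝ) / P n)) * ((K n : ℝ) ^ 2 / P n) ≤
      Real.exp (3 / 4 * (p n * L)) * (1.1 * q) := by gcongr
  refine hmain.trans ?_
  rcases le_or_gt (p n * L) 1 with h | h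
  · have : Real.exp (3 / 4 * (p n * L)) ≤ Real.exp 1 := Real.exp_le_exp.mpr (by linarith)
    have := mul_le_mul_of_nonneg_right this (by positivity : 0 ≤ 1.1 * q)
    linarith
  · have hnL : (n : ℝ) = Real.exp L := (Real.exp_log hn0').symm
    have h1 : n * q ≤ 1.2 * L ^ 2 := by
      calc n * q ≤ n * q * (p n * L) := le_mul_of_one_le_right (by positivity) h.le
        _ = L * (n * pef (K n) (P n) (p n)) := by unfold pef; ring
        _ ≤ L * (1.2 * L) := by gcongr
        _ = _ := by ring
    have h2 : q ≤ 1.2 * L ^ 2 * Real.exp (-L) := by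
      rw [Real.exp_neg, ← hnL, ← div_eq_mul_inv, le_div_iff₀ hn0']
      linarith
    have h3 : Real.exp (3 / 4 * (p n * L)) ≤ Real.exp (3 / 4 * L) :=
      Real.exp_le_exp.mpr (by nlinarith [hp1 n])
    have h4 : Real.exp (3 / 4 * L) * Real.exp (-L) = Real.exp (-(L / 4)) := by
      rw [← Real.exp_add]; congr 1; ring
    have h5 : 0 ≤ 1.1 * (Real.exp 1 * q) := by positivity
    calc _ ≤ Real.exp (3 / 4 * L) * (1.1 * (1.2 * L ^ 2 * Real.exp (-L))) := by gcongr
      _ = 1.1 * 1.2 * L ^ 2 * (Real.exp (3 / 4 * L) * Real.exp (-L)) := by ring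
      _ = 1.1 * 1.2 * 16 * ((L / 4) ^ 2 * Real.exp (-(L / 4))) := by rw [h4]; ring
      _ ≤ _ := by linarith

theorem eventually_log_add_le (c : ℝ) {α : ℕ → ℝ} (hα : Tendsto α atTop atBot) :
    ∀ᶠ n : ℕ in atTop,
      Real.log n + c * Real.log (Real.log n) + α n ≤ 1.2 * Real.log n := by
  have hlog : Tendsto (fun n : ℕ => Real.log n) atTop atTop :=
    Real.tendsto_log_atTop.comp tendsto_natCast_atTop_atTop
  have ho := ((Real.isLittleO_log_id_atTop.comp_tendsto hlog).const_mul_left c).bound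
    (by norm_num : (0 : ℝ) < 0.2)
  filter_upwards [ho, hα.eventually_le_atBot 0, hlog.eventually_gt_atTop 0] with n h1 h2 h3
  simp only [Function.comp, id, Real.norm_eq_abs, abs_of_pos h3] at h1
  have := (le_abs_self _).trans h1
  linarith

/-- the adjacent case is negligible compared to the non-adjacent
case. -/
theorem gon_joint_degree_edge_negligible
    (k : ℕ) (hk : 1 ≤ k) (K P : ℕ → ℕ) (p : ℕ → ℝ)
    (hKP : ∀ n, K n ≤ P n) (hp0 : ∀ n, 0 < p n) (hp1 : ∀ n, p n < 1)
    (hps : Tendsto (fun n : ℕ => psf (K n) (P n)) atTop (nhds 0))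
    (hK2 : ∀ᶠ n : ℕ in atTop, 2 ≤ K n)
    (α : ℕ → ℝ)
    (hα : ∀ n : ℕ, 1 ≤ n → pef (K n) (P n) (p n) =
      (Real.log n + ((k : ℝ) - 1) * Real.log (Real.log n) + α n) / (n : ℝ))
    (hαbot : Tendsto α atTop atBot)
    (hdeg : ∃ ε : ℝ, 0 < ε ∧ ∀ᶠ n : ℕ in atTop, ε < (n : ℝ) * pef (K n) (P n) (p n))
    (ℓ : ℕ) (hℓ : 1 ≤ ℓ) (x y : ℕ) (hxy : x ≠ y) :
    Tendsto (fun n : ℕ =>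
        (gonMeasure n (K n) (P n) (p n)
            (degEvent n (K n) (P n) x ℓ ∩ degEvent n (K n) (P n) y ℓ ∩
              edgeEvent n (K n) (P n) x y)).toReal /
          (gonMeasure n (K n) (P n) (p n)
            (degEvent n (K n) (P n) x ℓ ∩ degEvent n (K n) (P n) y ℓ ∩
              (edgeEvent n (K n) (P n) x y)ᶜ)).toReal)
      atTop (nhds 0) := by
  obtain ⟨ε, hε, hdeg⟩ := hdeg
  have hlog : Tendsto (fun n : ℕ => Real.log n) atTop atTop :=
    Real.tendsto_log_atTop.comp tendsto_natCast_atTop_atTop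
  have hpe : ∀ᶠ n : ℕ in atTop, n * pef (K n) (P n) (p n) ≤ 1.2 * Real.log n := by
    filter_upwards [eventually_log_add_le ((k : ℝ) - 1) hαbot, eventually_ge_atTop 1] with n h hn
    have hn' : (n : ℝ) ≠ 0 := by exact_mod_cast (by omega : n ≠ 0)
    rwa [hα n hn, mul_div_cancel₀ _ hn']
  have hsq : ∀ᶠ n : ℕ in atTop, n * pef (K n) (P n) (p n) ^ 2 ≤ 1 := by
    have h1 := ((Real.tendsto_pow_mul_exp_neg_atTop_nhds_zero 2).comp hlog).eventually_le_const
      (by norm_num : (0 : ℝ) < 1 / 2)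
    filter_upwards [h1, hpe, hdeg, eventually_gt_atTop 0] with n h1 h2 h3 hn
    have hn' : (0 : ℝ) < n := by exact_mod_cast hn
    simp only [Function.comp, Real.exp_neg, Real.exp_log hn', ← div_eq_mul_inv] at h1
    have h4 := pow_le_pow_left₀ (hε.trans h3).le h2 2
    rw [div_le_iff₀ hn'] at h1
    have h5 : (n : ℝ) * (n * pef (K n) (P n) (p n) ^ 2) ≤ n * 1 := by nlinarith
    exact le_of_mul_le_mul_left h5 hn'
  have hδ := tendsto_exp_mul_sq_div hKP hp0 hp1 hps hK2 hpe
  have hbound : Tendsto (fun n : ℕ =>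
      (4 / ε) ^ (2 * ℓ) * (2 * (ℓ.factorial : ℝ) ^ 2) * Real.exp (2 * ε + 10) *
        (Real.exp (Real.exp (n * p n ^ 2 * ((K n : ℝ) / P n)) * ((K n : ℝ) ^ 2 / P n)) - 1 +
          psf (K n) (P n))) atTop (nhds 0) := by
    have h1 := (((Real.continuous_exp.tendsto 0).comp hδ).sub_const 1).add hps
    simpa using h1.const_mul
      ((4 / ε) ^ (2 * ℓ) * (2 * (ℓ.factorial : ℝ) ^ 2) * Real.exp (2 * ε + 10))
  refine tendsto_of_tendsto_of_tendsto_of_le_of_le' tendsto_const_nhds hbound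
    (Eventually.of_forall fun n => by positivity) ?_
  filter_upwards [hsq, hdeg, hK2, hps.eventually_le_const (by norm_num : (0 : ℝ) < 1 / 11),
    eventually_ge_atTop (4 * ℓ + 2), eventually_gt_atTop x, eventually_gt_atTop y]
    with n h1 h2 h3 h4 h5 h6 h7
  have hP : 0 < P n := by have := hKP n; omega
  exact measureReal_adjacent_div_nonadjacent_le (hKP n) hP (hp0 n).le (hp1 n).le
    (x := ⟨x, h6⟩) (y := ⟨y, h7⟩) (by simpa using hxy) hℓ h5 hε h2.le h4 h1
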